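/- Let 𝕐 ⊆ 𝕏 be a maximal p_j-subscheme. Then there exists a choice of elements e_{j1},…,e_{jκ_j} ∈ 𝒪_{𝕏,p_j} whose residue classes form a K-basis of κ(p_j) such that the corresponding minimal separators satisfy I_{𝕐/𝕏} = ⟨f*_{j1},…,f*_{jκ_j}⟩_R, and for all i ∈ ℤ one has ΔHF_𝕐(i) = ΔHF_𝕏(i) − #{k ∈ {1,…,κ_j} | deg(f*_{jk}) = i}, where ΔHF(i) = HF(i) − HF(i−1). -/

import Mathlib

noncomputable section

/-! An algebraic model for a 0-dimensional subscheme `𝕏 ⊆ ℙⁿ_K` whose support avoids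
the hyperplane `Z(X₀)`.  The scheme is recorded through the local rings
`𝒪_{𝕏,p_j}` at the points `p_1, …, p_s` of its support, together with the germ map
sending a homogeneous polynomial `F` of degree `i` to the tuple of germs
`(F_{p_1}, …, F_{p_s})`; this is the degree-`i` component of the injection
`ĩ : R → Q^h(R) ≅ ∏_j 𝒪_{𝕏,p_j}[T_j, T_j⁻¹]`, where every graded component of
`Q^h(R)` is identified with `Γ = ∏_j 𝒪_{𝕏,p_j}` by dropping the powers of the `T_j`.
Since `x₀` has germ `1` at every point, the homogeneous coordinate ring
`R = P/I_𝕏` is faithfully encoded by the chain of subspaces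
`R_i ≅ V_i = germ(P_i) ⊆ Γ` (with `V_i ⊆ V_{i+1}`, and `V_i = Γ` for `i ≫ 0`). -/

/-- The data of one (fat) point of a 0-dimensional scheme: a finite local `K`-algebra. -/
structure PointData (K : Type) [Field K] : Type 1 where
  carrier : Type
  [ring : CommRing carrier]
  [alg : Algebra K carrier]
  [loc : IsLocalRing carrier]
  [findim : FiniteDimensional K carrier]

attribute [instance] PointData.ring PointData.alg PointData.loc PointData.findim

/-- A model of a 0-dimensional subscheme of `ℙⁿ_K`, no point of whose support lies
on `Z(X₀)` (coordinates being chosen so that each point has `X₀`-coordinate 1, the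
germ of `x₀` at every point is `1`). -/
structure ZeroDimScheme (K : Type) [Field K] (n : ℕ) : Type 1 where
  /-- the number of points in the support -/
  s : ℕ
  spos : 0 < s
  /-- the local rings `𝒪_{𝕏,p_j}` -/
  pt : Fin s → PointData K
  /-- the germ map: for `F` homogeneous of degree `i` this is the degree-`i`
  component of `ĩ : R → Q^h(R)`, i.e. `F ↦ (F_{p_1}, …, F_{p_s})` -/
  germ : MvPolynomial (Fin (n + 1)) K →ₐ[K] ∀ j, (pt j).carrier
  /-- the germ of `X₀` at each point is `1` -/
  germ_X0 : germ (MvPolynomial.X 0) = 1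
  /-- in all large degrees, the germ map is surjective onto `∏_j 𝒪_{𝕏,p_j}`
  (this characterizes `I_𝕏` as the full homogeneous vanishing ideal of the scheme) -/
  eventually_surj : ∃ N : ℕ, ∀ i, N ≤ i →
    Submodule.map germ.toLinearMap
      (MvPolynomial.homogeneousSubmodule (Fin (n + 1)) K i) = ⊤

namespace ZeroDimScheme

variable {K : Type} [Field K] {n : ℕ}

/-- `Γ = ∏_j 𝒪_{𝕏,p_j}`, the common model for every graded component of `Q^h(R)`. -/
abbrev Gamma (S : ZeroDimScheme K n) : Type := ∀ j, (S.pt j).carrier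

variable (S : ZeroDimScheme K n)

/-- `V i ⊆ Γ` is the image of the degree-`i` component `R_i` of the homogeneous
coordinate ring `R` under (the degree-`i` component of) `ĩ`; we identify `R_i ≅ V i`. -/
def V (i : ℕ) : Submodule K S.Gamma :=
  Submodule.map S.germ.toLinearMap
    (MvPolynomial.homogeneousSubmodule (Fin (n + 1)) K i)

/-- `R_i` for `i : ℤ` (zero in negative degrees). -/
def Vz (i : ℤ) : Submodule K S.Gamma := if 0 ≤ i then S.V i.toNat else ⊥

/-- `deg 𝕏 = Σ_j dim_K 𝒪_{𝕏,p_j}`. -/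
def degX : ℕ := Module.finrank K S.Gamma

/-- The Hilbert function `HF_𝕏(i) = dim_K R_i`. -/
def HF (i : ℕ) : ℕ := Module.finrank K (S.V i)

/-- The Hilbert function on `ℤ`. -/
def HFz (i : ℤ) : ℕ := Module.finrank K (S.Vz i)

/-- The regularity index `r_𝕏`: the least `r` with `HF_𝕏(i) = deg 𝕏` for all `i ≥ r`. -/
def rX : ℕ := sInf {r : ℕ | ∀ i, r ≤ i → S.HF i = S.degX}

/-- `κ_j = dim_K κ(p_j)`, the residue field of `𝕏` at `p_j`. -/
def kappa (j : Fin S.s) : ℕ :=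
  Module.finrank K
    ((S.pt j).carrier ⧸
      Submodule.restrictScalars K (IsLocalRing.maximalIdeal (S.pt j).carrier))

/-- `sj` is a socle element of `𝒪_{𝕏,p_j}`, i.e. `sj ∈ Ann(𝔪_{𝕏,p_j})`.  By
Proposition 1.2, the maximal `p_j`-subschemes `𝕐 ⊆ 𝕏` correspond 1-1 to the ideals
of `Γ` generated by `(0,…,0,sj,0,…,0)` with `sj` a *nonzero* socle element. -/
def IsSocle (j : Fin S.s) (sj : (S.pt j).carrier) : Prop :=
  ∀ b ∈ IsLocalRing.maximalIdeal (S.pt j).carrier, sj * b = 0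

/-- The ideal `U = ⟨(0,…,0,sj,0,…,0)⟩` of `Γ` corresponding to the maximal
`p_j`-subscheme `𝕐` determined by the socle element `sj`; one has `I_{𝕐/𝕏} = ĩ⁻¹(U)`. -/
def sepIdeal (j : Fin S.s) (sj : (S.pt j).carrier) : Submodule K S.Gamma :=
  Submodule.restrictScalars K (Ideal.span {(Pi.single j sj : S.Gamma)})

/-- The degree-`i` component `(I_{𝕐/𝕏})_i = R_i ∩ ĩ⁻¹(U)` of the ideal of the maximal
`p_j`-subscheme `𝕐` (given by the socle element `sj`) in `R`. -/
def IY (j : Fin S.s) (sj : (S.pt j).carrier) (i : ℕ) : Submodule K S.Gamma :=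
  S.V i ⊓ S.sepIdeal j sj

/-- `(I_{𝕐/𝕏})_i` for `i : ℤ`. -/
def IYz (j : Fin S.s) (sj : (S.pt j).carrier) (i : ℤ) : Submodule K S.Gamma :=
  S.Vz i ⊓ S.sepIdeal j sj

/-- The Hilbert function `HF_𝕐(i) = HF_𝕏(i) - dim_K (I_{𝕐/𝕏})_i` of the maximal
`p_j`-subscheme `𝕐` given by the socle element `sj`. -/
def HFY (j : Fin S.s) (sj : (S.pt j).carrier) (i : ℕ) : ℕ :=
  S.HF i - Module.finrank K (S.IY j sj i)

/-- `HF_𝕐` on `ℤ`. -/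
def HFYz (j : Fin S.s) (sj : (S.pt j).carrier) (i : ℤ) : ℕ :=
  S.HFz i - Module.finrank K (S.IYz j sj i)

/-- `α_{𝕐/𝕏} = min {i | (I_{𝕐/𝕏})_i ≠ 0}`. -/
def alphaY (j : Fin S.s) (sj : (S.pt j).carrier) : ℕ :=
  sInf {i : ℕ | S.IY j sj i ≠ ⊥}

/-- `μ(a) = min {i | (0,…,0,a T_j^i,0,…,0) ∈ ĩ(R)}` for `a ∈ 𝒪_{𝕏,p_j}`. -/
def mu (j : Fin S.s) (a : (S.pt j).carrier) : ℕ :=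
  sInf {i : ℕ | (Pi.single j a : S.Gamma) ∈ S.V i}

/-- `μ_{𝕐/𝕏}`, the maximal degree of a minimal separator of the maximal
`p_j`-subscheme `𝕐` given by the socle element `sj`; independently of all choices it
equals `max {μ(a·sj) | a ∈ 𝒪_{𝕏,p_j}, a·sj ≠ 0}`. -/
def muY (j : Fin S.s) (sj : (S.pt j).carrier) : ℕ :=
  sSup {m : ℕ | ∃ a : (S.pt j).carrier, a * sj ≠ 0 ∧ m = S.mu j (a * sj)}

/-- `deg_𝕏(p_j) = min {μ_{𝕐/𝕏} | 𝕐 a maximal p_j-subscheme of 𝕏}`. -/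
def degP (j : Fin S.s) : ℕ :=
  sInf {m : ℕ | ∃ sj : (S.pt j).carrier, S.IsSocle j sj ∧ sj ≠ 0 ∧ m = S.muY j sj}

/-- `𝕏` has the Cayley–Bacharach property of degree `d`: `deg_𝕏(p_j) ≥ d + 1` for all `j`. -/
def CBP (d : ℕ) : Prop := ∀ j : Fin S.s, d + 1 ≤ S.degP j

/-- `𝕏` is a Cayley–Bacharach scheme: it has `CBP(r_𝕏 - 1)`. -/
def CayleyBacharach : Prop := S.CBP (S.rX - 1)

/-- The residue class map `𝒪_{𝕏,p_j} → κ(p_j)` as a `K`-linear map. -/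
def resQ (j : Fin S.s) :
    (S.pt j).carrier →ₗ[K]
      ((S.pt j).carrier ⧸
        Submodule.restrictScalars K (IsLocalRing.maximalIdeal (S.pt j).carrier)) :=
  (Submodule.restrictScalars K (IsLocalRing.maximalIdeal (S.pt j).carrier)).mkQ

/-- The residue classes of `e 0, …, e (κ_j - 1)` form a `K`-basis of `κ(p_j)`. -/
def IsResidueBasis (j : Fin S.s) {m : ℕ} (e : Fin m → (S.pt j).carrier) : Prop :=
  LinearIndependent K (fun k => S.resQ j (e k)) ∧
    Submodule.span K (Set.range fun k => S.resQ j (e k)) = ⊤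

/-- A family `τ_j : 𝒪_{𝕏,p_j} → K` of trace maps: each `τ_j` is a generator of
`Hom_K(𝒪_{𝕏,p_j}, K)` as an `𝒪_{𝕏,p_j}`-module.  Such a family exists iff `𝕏` is
locally Gorenstein, and it induces a homogeneous trace map `σ` of degree zero of
`Q^h(R)/L₀` (componentwise). -/
def IsTraceFamily (τ : ∀ j, (S.pt j).carrier →ₗ[K] K) : Prop :=
  ∀ j, Function.Bijective
    (fun a : (S.pt j).carrier => (τ j).comp (LinearMap.mulRight K a))

/-- The total trace `Γ → K`, `y ↦ Σ_j τ_j (y_j)`; on the degree-`i` component of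
`Q^h(R)` the trace map `σ` is `q ↦ (Ttot τ q)·x₀^i`. -/
def Ttot (τ : ∀ j, (S.pt j).carrier →ₗ[K] K) : S.Gamma →ₗ[K] K :=
  ∑ j : Fin S.s, (τ j).comp (LinearMap.proj j)

/-- The degree-`k` component `(𝔠^σ_𝕏)_k ⊆ Q^h(R)_k ≅ Γ` of the Dedekind complementary
module: `g ∈ (𝔠^σ_𝕏)_k` iff `σ(g · R) ⊆ K[x₀]`, i.e. `Ttot τ (g·x) = 0` whenever
`x ∈ R_i` with `k + i < 0`. -/
def Cmod (τ : ∀ j, (S.pt j).carrier →ₗ[K] K) (k : ℤ) : Submodule K S.Gamma :=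
  ⨅ (i : ℕ) (_ : k + (i : ℤ) < 0) (x : S.Gamma) (_ : x ∈ S.V i),
    LinearMap.ker ((S.Ttot τ).comp (LinearMap.mulRight K x))

/-- The degree-`i` component `(δ^σ_𝕏)_i ⊆ Q^h(R)_i ≅ Γ` of the Dedekind different
`δ^σ_𝕏 = {f ∈ Q^h(R) | f · 𝔠^σ_𝕏 ⊆ R}`. -/
def delta (τ : ∀ j, (S.pt j).carrier →ₗ[K] K) (i : ℤ) : Submodule K S.Gamma :=
  ⨅ (k : ℤ) (g : S.Gamma) (_ : g ∈ S.Cmod τ k),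
    Submodule.comap (LinearMap.mulRight K g) (S.Vz (i + k))

/-- The Hilbert function of the Dedekind different. -/
def HFdelta (τ : ∀ j, (S.pt j).carrier →ₗ[K] K) (i : ℤ) : ℕ :=
  Module.finrank K (S.delta τ i)

/-- `𝕏` has minimal Dedekind different: `δ^σ_𝕏 = ⊕_{i ≥ 2 r_𝕏} R_i`
(recall `R_i ≅ Γ` for `i ≥ r_𝕏`). -/
def MinimalDedekind (τ : ∀ j, (S.pt j).carrier →ₗ[K] K) : Prop :=
  ∀ i : ℤ, S.delta τ i = if 2 * (S.rX : ℤ) ≤ i then ⊤ else ⊥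

/-- The degree-`i` component (`i ≥ 0`) of the conductor
`𝔉_{R̃/R} = {f ∈ R̃ | f·R̃ ⊆ R}` of `R` in `R̃ = ∏_j 𝒪_{𝕏,p_j}[T_j]`
(whose degree-`i` component is all of `Γ` for every `i ≥ 0`). -/
def cond (i : ℕ) : Submodule K S.Gamma :=
  ⨅ y : S.Gamma, Submodule.comap (LinearMap.mulRight K y) (S.V i)

/-- The conductor on `ℤ` (zero in negative degrees, where `R̃` vanishes). -/
def condZ (i : ℤ) : Submodule K S.Gamma := if 0 ≤ i then S.cond i.toNat else ⊥

/-- The degree-`i` component of the trace `tr(𝔠^σ_𝕏) = δ^σ_𝕏 · 𝔠^σ_𝕏` of the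
Dedekind complementary module. -/
def trC (τ : ∀ j, (S.pt j).carrier →ₗ[K] K) (i : ℤ) : Submodule K S.Gamma :=
  ⨆ (a : ℤ) (b : ℤ) (_ : a + b = i), S.delta τ a * S.Cmod τ b

/-- `𝕏` is nearly Gorenstein: `𝔪 ⊆ tr(𝔠^σ_𝕏)`. -/
def NearlyGorenstein (τ : ∀ j, (S.pt j).carrier →ₗ[K] K) : Prop :=
  ∀ i : ℤ, 1 ≤ i → S.Vz i ≤ S.trC τ i

/-- `𝕏` is almost Gorenstein: there is an exact sequence of graded `R`-modules
`0 → R → 𝔠^σ_𝕏(-r_𝕏) → C → 0` with `𝔪·C = 0`.  A degree-zero graded injection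
`R → 𝔠^σ_𝕏(-r_𝕏)` is multiplication by an element `g ∈ (𝔠^σ_𝕏)_{-r_𝕏}` with
`Ann_R(g) = 0`, and `𝔪·C = 0` means `𝔪 · 𝔠^σ_𝕏(-r_𝕏) ⊆ g·R`. -/
def AlmostGorenstein (τ : ∀ j, (S.pt j).carrier →ₗ[K] K) : Prop :=
  ∃ g ∈ S.Cmod τ (-(S.rX : ℤ)),
    (∀ i : ℕ, ∀ x ∈ S.V i, x * g = 0 → x = 0) ∧
    (∀ a : ℕ, 1 ≤ a → ∀ x ∈ S.V a, ∀ k : ℤ, ∀ h ∈ S.Cmod τ k,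
      x * h ∈ Submodule.map (LinearMap.mulRight K g) (S.Vz ((a : ℤ) + k + (S.rX : ℤ))))

/-- `𝕏` is arithmetically Gorenstein, i.e. `R` is a Gorenstein ring; equivalently the
canonical module is free of rank one: `𝔠^σ_𝕏 = g·R` for some `g ∈ (𝔠^σ_𝕏)_{-r_𝕏}`. -/
def ArithGorenstein (τ : ∀ j, (S.pt j).carrier →ₗ[K] K) : Prop :=
  ∃ g ∈ S.Cmod τ (-(S.rX : ℤ)),
    ∀ k : ℤ, S.Cmod τ k = Submodule.map (LinearMap.mulRight K g) (S.Vz (k + (S.rX : ℤ)))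

/-- `𝕏` is level: the socle of `R̄ = R/⟨x₀⟩` equals `R̄_{r_𝕏}`, i.e. no nonzero
homogeneous element of `R̄` of degree `< r_𝕏` is annihilated by `𝔪̄` (recall
`R̄_i ≅ V i / V (i-1)` and `x₀`-multiplication preserves germs). -/
def Level : Prop :=
  ∀ i : ℕ, i < S.rX → ∀ x ∈ S.V i,
    (∀ a : ℕ, 1 ≤ a → ∀ y ∈ S.V a, x * y ∈ S.Vz ((i : ℤ) + (a : ℤ) - 1)) →
      x ∈ S.Vz ((i : ℤ) - 1)

/-- The subspace `{x ∈ Γ | x_k = 0 for k ≠ j}` of `Γ`: the degreewise model for the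
ideal of the subscheme `𝕐_j ⊆ 𝕏` with `I_{𝕐_j} = ∩_{k ≠ j} I_k`. -/
def Wj (j : Fin S.s) : Submodule K S.Gamma :=
  ⨅ (k : Fin S.s) (_ : k ≠ j),
    LinearMap.ker (LinearMap.proj k : S.Gamma →ₗ[K] (S.pt k).carrier)

/-- `(I_{𝕐_j/𝕏})_i` for the subscheme `𝕐_j` complementary to `p_j`. -/
def IW (j : Fin S.s) (i : ℕ) : Submodule K S.Gamma := S.V i ⊓ S.Wj j

/-- The Hilbert function of the subscheme `𝕐_j` complementary to `p_j`. -/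
def HFW (j : Fin S.s) (i : ℕ) : ℕ := S.HF i - Module.finrank K (S.IW j i)

/-- `α_{𝕐_j/𝕏}` for the subscheme `𝕐_j` complementary to `p_j`. -/
def alphaW (j : Fin S.s) : ℕ := sInf {i : ℕ | S.IW j i ≠ ⊥}

/-- The subspace `{x ∈ Γ | x_k = 0 for k ∉ {j₁, j₂}}` of `Γ`: the degreewise model for
the ideal in `R` of the subscheme of the reduced scheme `𝕏` complementary to `{p_{j₁}, p_{j₂}}`. -/
def Wpair (j1 j2 : Fin S.s) : Submodule K S.Gamma :=
  ⨅ (k : Fin S.s) (_ : k ≠ j1) (_ : k ≠ j2),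
    LinearMap.ker (LinearMap.proj k : S.Gamma →ₗ[K] (S.pt k).carrier)

/-- The homogeneous vanishing ideal `I_𝕏 ⊆ P`. -/
def IX : Ideal (MvPolynomial (Fin (n + 1)) K) :=
  Ideal.span {F | (∃ i : ℕ, F ∈ MvPolynomial.homogeneousSubmodule (Fin (n + 1)) K i) ∧
    S.germ F = 0}

/-- The `n×n`-minor (Jacobian determinant with respect to `X_1, …, X_n`) of an
`n`-tuple of polynomials. -/
def jacMinor (Fs : Fin n → MvPolynomial (Fin (n + 1)) K) : MvPolynomial (Fin (n + 1)) K :=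
  Matrix.det (Matrix.of fun a b : Fin n => MvPolynomial.pderiv (Fin.succ b) (Fs a))

/-- The preimage in `P` of the Kähler different `ϑ_𝕏 ⊆ R`: the ideal generated by
`I_𝕏` together with all `n×n` minors of the Jacobian matrix of elements of `I_𝕏`. -/
def KaehlerIdeal : Ideal (MvPolynomial (Fin (n + 1)) K) :=
  S.IX ⊔ Ideal.span {m | ∃ Fs : Fin n → MvPolynomial (Fin (n + 1)) K,
    (∀ a, Fs a ∈ S.IX) ∧ m = jacMinor Fs}

/-- The degree-`i` component of the Kähler different `ϑ_𝕏 ⊆ R`, viewed inside `Γ`. -/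
def thetaPiece (i : ℕ) : Submodule K S.Gamma :=
  Submodule.map S.germ.toLinearMap
    (Submodule.restrictScalars K S.KaehlerIdeal ⊓
      MvPolynomial.homogeneousSubmodule (Fin (n + 1)) K i)

end ZeroDimScheme

end
theorem adapted_set {K M : Type} [Field K] [AddCommGroup M] [Module K M]
    (W : ℕ → Submodule K M) (hW : Monotone W) (N : ℕ) :
    ∃ s : Set M, s ⊆ W N ∧ LinearIndepOn K id s ∧
      ∀ i ≤ N, W i ≤ Submodule.span K (s ∩ W i) := by
  induction N with
  | zero =>
    obtain ⟨b, hb, -, hb2, hb3⟩ := exists_linearIndepOn_id_extension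
      (linearIndepOn_empty K (id : M → M)) (Set.empty_subset (W 0 : Set M))
    refine ⟨b, hb, hb3, fun i hi => ?_⟩
    obtain rfl : i = 0 := by omega
    rw [Set.inter_eq_left.2 hb]
    exact hb2
  | succ N ih =>
    obtain ⟨s, h1, h2, h3⟩ := ih
    obtain ⟨b, hb, hsb, hb2, hb3⟩ := exists_linearIndepOn_id_extension h2
      (h1.trans (hW (Nat.le_succ N)))
    refine ⟨b, hb, hb3, fun i hi => ?_⟩
    rcases Nat.lt_or_ge N i with h | h
    · obtain rfl : i = N + 1 := by omega
      rw [Set.inter_eq_left.2 hb]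
      exact hb2
    · exact (h3 i h).trans (Submodule.span_mono (Set.inter_subset_inter_left _ hsb))

theorem adapted_basis {K M : Type} [Field K] [AddCommGroup M] [Module K M]
    [FiniteDimensional K M]
    (W : ℕ → Submodule K M) (hW : Monotone W) (N : ℕ) (hN : W N = ⊤)
    (d : ℕ) (hd : d = Module.finrank K M) :
    ∃ b : Module.Basis (Fin d) K M,
      ∀ i, W i = Submodule.span K (b '' {k | b k ∈ W i}) := by
  obtain ⟨s, h1, h2, h3⟩ := adapted_set W hW N
  have hspan : ⊤ ≤ Submodule.span K (Set.range ((↑) : s → M)) := by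
    rw [Subtype.range_coe, ← hN]
    exact (h3 N le_rfl).trans (Submodule.span_mono Set.inter_subset_left)
  let b0 : Module.Basis s K M := Module.Basis.mk h2 hspan
  have : Fintype s := Module.Basis.fintypeIndexOfRankLtAleph0 b0
    (Module.rank_lt_aleph0 K M)
  have hc : Fintype.card s = d := by
    rw [hd, Module.finrank_eq_card_basis b0]
  let eq : s ≃ Fin d := Fintype.equivFinOfCardEq hc
  refine ⟨b0.reindex eq, fun i => le_antisymm ?_ ?_⟩
  · have key : W i ≤ Submodule.span K (s ∩ W i) := by
      rcases le_total i N with h | h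
      · exact h3 i h
      · have : W i = ⊤ := top_le_iff.1 (hN ▸ hW h)
        rw [this]
        simpa using hspan
    refine key.trans (Submodule.span_mono ?_)
    rintro x ⟨hx, hxi⟩
    have : b0.reindex eq (eq ⟨x, hx⟩) = x := by simp [b0]
    exact ⟨eq ⟨x, hx⟩, by rw [Set.mem_setOf_eq, this]; exact hxi, this⟩
  · rw [Submodule.span_le]
    rintro _ ⟨k, hk, rfl⟩
    exact hk

namespace ZeroDimScheme

theorem one_mem_V {K : Type} [Field K] {n : ℕ} (S : ZeroDimScheme K n) (i : ℕ) :
    (1 : S.Gamma) ∈ S.V i := by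
  refine ⟨MvPolynomial.X 0 ^ i, ?_, ?_⟩
  · simpa using MvPolynomial.isHomogeneous_X_pow (R := K) (0 : Fin (n+1)) i
  · simp [S.germ_X0]

theorem mul_mem_V {K : Type} [Field K] {n : ℕ} (S : ZeroDimScheme K n) {i k : ℕ}
    {x y : S.Gamma} (hx : x ∈ S.V i) (hy : y ∈ S.V k) : x * y ∈ S.V (i + k) := by
  obtain ⟨f, hf, rfl⟩ := hx
  obtain ⟨g, hg, rfl⟩ := hy
  exact ⟨f * g, MvPolynomial.IsHomogeneous.mul hf hg, by simp⟩

theorem V_mono {K : Type} [Field K] {n : ℕ} (S : ZeroDimScheme K n) : Monotone S.V := by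
  intro a b hab x hx
  have := S.mul_mem_V hx (S.one_mem_V (b - a))
  rwa [mul_one, Nat.add_sub_cancel' hab] at this

theorem mu_le_iff {K : Type} [Field K] {n : ℕ} (S : ZeroDimScheme K n) (j : Fin S.s)
    (a : (S.pt j).carrier) (i : ℕ) :
    S.mu j a ≤ i ↔ (Pi.single j a : S.Gamma) ∈ S.V i := by
  constructor
  · intro h
    refine S.V_mono h ?_
    obtain ⟨N, hN⟩ := S.eventually_surj
    refine Nat.sInf_mem (s := {i : ℕ | (Pi.single j a : S.Gamma) ∈ S.V i}) ⟨N, ?_⟩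
    have : S.V N = ⊤ := hN N le_rfl
    simp [this]
  · intro h
    exact Nat.sInf_le h

/-- Multiplication by the socle element, on the residue field. -/
def phi {K : Type} [Field K] {n : ℕ} (S : ZeroDimScheme K n) (j : Fin S.s)
    (sj : (S.pt j).carrier) (hsoc : S.IsSocle j sj) :
    ((S.pt j).carrier ⧸
      Submodule.restrictScalars K (IsLocalRing.maximalIdeal (S.pt j).carrier)) →ₗ[K] S.Gamma :=
  Submodule.liftQ _ ((LinearMap.single K (fun j => (S.pt j).carrier) j).comp
    (LinearMap.mulRight K sj)) (by
      intro b hb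
      have h0 : b * sj = 0 := by rw [mul_comm]; exact hsoc b hb
      simp [h0])

theorem phi_resQ {K : Type} [Field K] {n : ℕ} (S : ZeroDimScheme K n) (j : Fin S.s)
    (sj : (S.pt j).carrier) (hsoc : S.IsSocle j sj) (a : (S.pt j).carrier) :
    S.phi j sj hsoc (S.resQ j a) = Pi.single j (a * sj) := rfl

theorem resQ_surj {K : Type} [Field K] {n : ℕ} (S : ZeroDimScheme K n) (j : Fin S.s) :
    Function.Surjective (S.resQ j) := Submodule.mkQ_surjective _

theorem phi_inj {K : Type} [Field K] {n : ℕ} (S : ZeroDimScheme K n) (j : Fin S.s)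
    (sj : (S.pt j).carrier) (hsoc : S.IsSocle j sj) (hsj : sj ≠ 0) :
    Function.Injective (S.phi j sj hsoc) := by
  rw [← LinearMap.ker_eq_bot, LinearMap.ker_eq_bot']
  intro q hq
  obtain ⟨a, rfl⟩ := S.resQ_surj j q
  rw [phi_resQ, Pi.single_eq_zero_iff] at hq
  refine (Submodule.Quotient.mk_eq_zero _).2 ?_
  change a ∈ IsLocalRing.maximalIdeal (S.pt j).carrier
  rw [IsLocalRing.mem_maximalIdeal, mem_nonunits_iff]
  intro hu
  exact hsj ((hu.mul_right_eq_zero).1 hq)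

theorem phi_range {K : Type} [Field K] {n : ℕ} (S : ZeroDimScheme K n) (j : Fin S.s)
    (sj : (S.pt j).carrier) (hsoc : S.IsSocle j sj) :
    LinearMap.range (S.phi j sj hsoc) = S.sepIdeal j sj := by
  ext x
  change _ ↔ x ∈ Ideal.span {(Pi.single j sj : S.Gamma)}
  rw [Ideal.mem_span_singleton', LinearMap.mem_range]
  constructor
  · rintro ⟨q, rfl⟩
    obtain ⟨a, rfl⟩ := S.resQ_surj j q
    exact ⟨Pi.single j a, by rw [phi_resQ, Pi.single_mul]⟩
  · rintro ⟨a, rfl⟩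
    refine ⟨S.resQ j (a j), ?_⟩
    rw [phi_resQ]
    ext k
    rcases eq_or_ne k j with rfl | h
    · simp
    · simp [h]

end ZeroDimScheme

/-- Proposition 1.5(c).  Let `𝕐 ⊆ 𝕏` be a maximal `p_j`-subscheme
(given by a nonzero socle element `sj`).  Then there is a choice of elements
`e_{j1}, …, e_{jκ_j} ∈ 𝒪_{𝕏,p_j}` whose residue classes form a `K`-basis of
`κ(p_j)` such that the corresponding minimal separators
`f*_{jk} = ĩ⁻¹((0,…,0, e_{jk}·sj·T_j^{μ(e_{jk} sj)},0,…,0))` satisfy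
`I_{𝕐/𝕏} = ⟨f*_{j1}, …, f*_{jκ_j}⟩_R` (degreewise:
`(I_{𝕐/𝕏})_i = Σ_k f*_{jk} · R_{i - deg f*_{jk}}`), and for all `i ∈ ℤ` one has
`ΔHF_𝕐(i) = ΔHF_𝕏(i) - #{k | deg f*_{jk} = i}`. -/
theorem dedekind_CB_stmt2 (K : Type) [Field K] (n : ℕ) (S : ZeroDimScheme K n)
    (j : Fin S.s) (sj : (S.pt j).carrier) (hsoc : S.IsSocle j sj) (hsj : sj ≠ 0) :
    ∃ e : Fin (S.kappa j) → (S.pt j).carrier, S.IsResidueBasis j e ∧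
      (∀ i : ℕ, S.IY j sj i =
        ⨆ k : Fin (S.kappa j),
          Submodule.map (LinearMap.mulRight K (Pi.single j (e k * sj) : S.Gamma))
            (S.Vz ((i : ℤ) - (S.mu j (e k * sj) : ℤ)))) ∧
      (∀ i : ℤ,
        (S.HFYz j sj i : ℤ) - (S.HFYz j sj (i - 1) : ℤ) =
          ((S.HFz i : ℤ) - (S.HFz (i - 1) : ℤ)) -
            ((Finset.univ.filter fun k : Fin (S.kappa j) =>
              (S.mu j (e k * sj) : ℤ) = i).card : ℤ)) := by
  classical
  obtain ⟨N, hN⟩ := S.eventually_surj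
  have hN' : S.V N = ⊤ := hN N le_rfl
  obtain ⟨b, hb⟩ := adapted_basis (fun i => (S.V i).comap (S.phi j sj hsoc))
    (fun a c h => Submodule.comap_mono (S.V_mono h)) N (by simp [hN']) (S.kappa j) rfl
  have hinj := S.phi_inj j sj hsoc hsj
  choose e he using fun k => S.resQ_surj j (b k)
  have hIY : ∀ i, S.IY j sj i = ((S.V i).comap (S.phi j sj hsoc)).map (S.phi j sj hsoc) := by
    intro i
    rw [Submodule.map_comap_eq, S.phi_range, inf_comm]
    rfl
  have hmem : ∀ i k, b k ∈ (S.V i).comap (S.phi j sj hsoc) ↔ S.mu j (e k * sj) ≤ i := by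
    intro i k
    rw [S.mu_le_iff, Submodule.mem_comap, ← he, S.phi_resQ]
  have hrank : ∀ i : ℕ, Module.finrank K (S.IY j sj i) =
      (Finset.univ.filter fun k => S.mu j (e k * sj) ≤ i).card := by
    intro i
    rw [hIY, (Submodule.equivMapOfInjective _ hinj _).finrank_eq.symm]
    have h1 := hb i
    simp only [hmem] at h1
    rw [h1]
    have h2 : (b '' {k | S.mu j (e k * sj) ≤ i}) =
        (((Finset.univ.filter fun k => S.mu j (e k * sj) ≤ i).image b : Finset _) : Set _) := by
      ext; simp
    rw [h2, finrank_span_finset_eq_card, Finset.card_image_of_injective _ b.injective]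
    have := (b.linearIndependent.linearIndepOn_id).mono
      (t := (((Finset.univ.filter fun k => S.mu j (e k * sj) ≤ i).image b : Finset _) : Set _))
      (by intro x; simp; rintro k - rfl; exact ⟨k, rfl⟩)
    exact this
  have hrankz : ∀ i : ℤ, Module.finrank K (S.IYz j sj i) =
      (Finset.univ.filter fun k => (S.mu j (e k * sj) : ℤ) ≤ i).card := by
    intro i
    by_cases hi : 0 ≤ i
    · lift i to ℕ using hi
      have : S.IYz j sj i = S.IY j sj i := by
        simp [ZeroDimScheme.IYz, ZeroDimScheme.IY, ZeroDimScheme.Vz]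
      rw [this, hrank]
      simp
    · have h0 : S.IYz j sj i = ⊥ := by
        simp [ZeroDimScheme.IYz, ZeroDimScheme.Vz, hi]
      rw [h0, finrank_bot, eq_comm, Finset.card_eq_zero, Finset.filter_eq_empty_iff]
      intro k _ h
      omega
  refine ⟨e, ⟨?_, ?_⟩, ?_, ?_⟩
  · have : (fun k => S.resQ j (e k)) = b := funext he
    rw [this]; exact b.linearIndependent
  · have : (fun k => S.resQ j (e k)) = b := funext he
    rw [this]; exact b.span_eq
  · intro i
    apply le_antisymm
    · rw [hIY, hb i, Submodule.map_span, Submodule.span_le]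
      rintro _ ⟨_, ⟨k, hk, rfl⟩, rfl⟩
      have hk' := (hmem i k).1 hk
      refine Submodule.mem_iSup_of_mem k ⟨1, ?_, ?_⟩
      · have : (0 : ℤ) ≤ (i : ℤ) - (S.mu j (e k * sj) : ℤ) := by omega
        simp only [ZeroDimScheme.Vz, this, if_true]
        exact S.one_mem_V _
      · rw [← he, S.phi_resQ]
        simp
    · refine iSup_le fun k => ?_
      rintro _ ⟨x, hx, rfl⟩
      by_cases h : (0 : ℤ) ≤ (i : ℤ) - (S.mu j (e k * sj) : ℤ)
      · simp only [ZeroDimScheme.Vz, h, if_true] at hx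
        have h1 := S.mul_mem_V hx ((S.mu_le_iff j (e k * sj) _).1 le_rfl)
        have h2 : ((i : ℤ) - (S.mu j (e k * sj) : ℤ)).toNat + S.mu j (e k * sj) = i := by omega
        rw [h2] at h1
        refine ⟨h1, ?_⟩
        change x * _ ∈ Ideal.span {(Pi.single j sj : S.Gamma)}
        rw [Pi.single_mul]
        exact Ideal.mul_mem_left _ _ (Ideal.mul_mem_left _ _
          (Ideal.subset_span (Set.mem_singleton _)))
      · simp only [ZeroDimScheme.Vz, h, if_false] at hx
        have : x = 0 := hx
        subst this
        simp
  · intro i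
    have hle : ∀ i, Module.finrank K (S.IYz j sj i) ≤ S.HFz i := fun i =>
      Submodule.finrank_mono inf_le_left
    have hsum : (Finset.univ.filter fun k => (S.mu j (e k * sj) : ℤ) ≤ i).card =
        (Finset.univ.filter fun k => (S.mu j (e k * sj) : ℤ) ≤ i - 1).card +
        (Finset.univ.filter fun k => (S.mu j (e k * sj) : ℤ) = i).card := by
      rw [← Finset.card_union_of_disjoint]
      · congr 1
        ext k
        simp only [Finset.mem_filter, Finset.mem_univ, true_and, Finset.mem_union]
        omega
      · rw [Finset.disjoint_left]
        intro k
        simp only [Finset.mem_filter, Finset.mem_univ, true_and]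
        omega
    have a1 := hle i
    have a2 := hle (i - 1)
    have a3 := hrankz i
    have a4 := hrankz (i - 1)
    have b1 : S.HFYz j sj i = S.HFz i - Module.finrank K (S.IYz j sj i) := rfl
    have b2 : S.HFYz j sj (i - 1) = S.HFz (i - 1) - Module.finrank K (S.IYz j sj (i - 1)) := rfl
    rw [b1, b2, Nat.cast_sub a1, Nat.cast_sub a2, a3, a4, hsum]
    push_cast
    ring
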